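/- Let S be a Boolean inverse semigroup and let e, f be nonzero idempotents of S. Then f ≼ e if and only if f belongs to every additive ideal of S that contains e. -/

import Mathlib

namespace Paper

/-- An inverse semigroup with zero: an associative multiplication, a zero that is
absorbing, and a map `⁻¹` sending each element to its unique generalized inverse. -/
class IsInverseSemigroup (S : Type*) [Mul S] [Zero S] [Inv S] : Prop where
  mul_assoc : ∀ a b c : S, a * b * c = a * (b * c)
  mul_inv_mul : ∀ a : S, a * a⁻¹ * a = a
  inv_mul_inv : ∀ a : S, a⁻¹ * a * a⁻¹ = a⁻¹
  inv_unique : ∀ a b : S, a * b * a = a → b * a * b = b → b = a⁻¹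
  zero_mul : ∀ a : S, 0 * a = 0
  mul_zero : ∀ a : S, a * 0 = 0

variable {S : Type*} [Mul S] [Zero S] [Inv S]

/-- The natural partial order: `a ≤ b` iff `a = b * a⁻¹ * a`. -/
def nle (a b : S) : Prop := a = b * a⁻¹ * a

/-- `e` is an idempotent. -/
def idem (e : S) : Prop := e * e = e

/-- `a` and `b` are compatible. -/
def compat (a b : S) : Prop := idem (a⁻¹ * b) ∧ idem (a * b⁻¹)

/-- `a` and `b` are orthogonal. -/
def orth (a b : S) : Prop := a⁻¹ * b = 0 ∧ a * b⁻¹ = 0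

/-- `j` is the least upper bound of `a` and `b` for the natural partial order. -/
def isJoin (a b j : S) : Prop :=
  nle a j ∧ nle b j ∧ ∀ c : S, nle a c → nle b c → nle j c

/-- `m` is the greatest lower bound of `a` and `b` for the natural partial order. -/
def isMeet (a b m : S) : Prop :=
  nle m a ∧ nle m b ∧ ∀ c : S, nle c a → nle c b → nle c m

/-- `a` is an atom: a nonzero element with nothing strictly between it and `0`. -/
def isAtomElem (a : S) : Prop := a ≠ 0 ∧ ∀ x : S, nle x a → x = a ∨ x = 0

/-- `s` is the least upper bound of the finite family `f`. -/
def isJoinFin {m : ℕ} (f : Fin m → S) (s : S) : Prop :=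
  (∀ i, nle (f i) s) ∧ ∀ c : S, (∀ i, nle (f i) c) → nle s c

/-- A Boolean inverse semigroup: a nonzero inverse semigroup with zero in which
compatible pairs have joins, multiplication distributes over binary compatible joins,
and the idempotents form a generalized Boolean algebra under the natural partial
order (meets of idempotents are automatically given by multiplication; the extra
requirement is the existence of relative complements). -/
class IsBooleanInverseSemigroup (S : Type*) [Mul S] [Zero S] [Inv S]
    extends IsInverseSemigroup S : Prop where
  exists_ne_zero : ∃ a : S, a ≠ 0
  compat_join : ∀ a b : S, compat a b → ∃ j, isJoin a b j
  mul_join : ∀ a b j c : S, isJoin a b j → isJoin (c * a) (c * b) (c * j)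
  join_mul : ∀ a b j c : S, isJoin a b j → isJoin (a * c) (b * c) (j * c)
  relcomp : ∀ e f : S, idem e → idem f → nle f e →
    ∃ g : S, idem g ∧ nle g e ∧ g * f = 0 ∧ isJoin f g e


/-- An additive ideal: a nonempty two-sided semigroup ideal closed under binary
compatible joins. -/
def isAdditiveIdeal {S : Type*} [Mul S] [Inv S] (I : Set S) : Prop :=
  I.Nonempty ∧ (∀ a ∈ I, ∀ s : S, s * a ∈ I ∧ a * s ∈ I) ∧
    (∀ a ∈ I, ∀ b ∈ I, compat a b → ∀ j : S, isJoin a b j → j ∈ I)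

/-- `f ≼ e`: there is a pencil `x₁, …, xₘ` from `f` to `e`, i.e.
`f = ⋁ᵢ d(xᵢ)` and `r(xᵢ) ≤ e` for all `i`. -/
def pencilLe {S : Type*} [Mul S] [Inv S] (f e : S) : Prop :=
  ∃ (m : ℕ) (x : Fin (m + 1) → S),
    isJoinFin (fun i => (x i)⁻¹ * x i) f ∧ ∀ i, nle (x i * (x i)⁻¹) e

/-- `S` is `0`-simplifying: it is nonzero and its only additive ideals are `{0}`
and `S`. -/
def isZeroSimplifying (S : Type*) [Mul S] [Zero S] [Inv S] : Prop :=
  (∃ a : S, a ≠ 0) ∧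
    ∀ I : Set S, isAdditiveIdeal I → I = {(0 : S)} ∨ I = Set.univ

/-- `S` is fundamental: every element commuting with all idempotents is idempotent. -/
def isFundamental (S : Type*) [Mul S] : Prop :=
  ∀ a : S, (∀ e : S, idem e → a * e = e * a) → idem a

/-- A morphism (additive homomorphism) of Boolean inverse semigroups: a semigroup
homomorphism preserving `0` and binary compatible joins. -/
def isMorphism {S : Type*} {T : Type*} [Mul S] [Zero S] [Inv S]
    [Mul T] [Zero T] [Inv T] (θ : S → T) : Prop :=
  (∀ a b : S, θ (a * b) = θ a * θ b) ∧ θ 0 = 0 ∧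
    ∀ a b j : S, compat a b → isJoin a b j → isJoin (θ a) (θ b) (θ j)

section helpers
variable {S : Type*} [Mul S] [Zero S] [Inv S]

section inv
variable [IsInverseSemigroup S]
open IsInverseSemigroup

theorem h_assoc (a b c : S) : a * b * c = a * (b * c) := IsInverseSemigroup.mul_assoc a b c

theorem h_mim (a : S) : a * (a⁻¹ * a) = a := by rw [← h_assoc, mul_inv_mul]
theorem h_imi (a : S) : a⁻¹ * (a * a⁻¹) = a⁻¹ := by rw [← h_assoc, inv_mul_inv]
theorem h_mim' (a b : S) : a * (a⁻¹ * (a * b)) = a * b := by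
  rw [← h_assoc, ← h_assoc, mul_inv_mul]
theorem h_imi' (a b : S) : a⁻¹ * (a * (a⁻¹ * b)) = a⁻¹ * b := by
  rw [← h_assoc, ← h_assoc, inv_mul_inv]

theorem h_invinv (a : S) : a⁻¹⁻¹ = a :=
  (inv_unique a⁻¹ a (inv_mul_inv a) (mul_inv_mul a)).symm

theorem h_ideminv {g : S} (hg : idem g) : g⁻¹ = g := by
  unfold idem at hg
  exact (inv_unique g g (by rw [hg, hg]) (by rw [hg, hg])).symm

theorem h_idem_mul {g h : S} (hg : idem g) (hh : idem h) : idem (g * h) := by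
  unfold idem at hg hh
  have hg' : ∀ y, g * (g * y) = g * y := fun y => by rw [← h_assoc, hg]
  have hh' : ∀ y, h * (h * y) = h * y := fun y => by rw [← h_assoc, hh]
  have e1 := h_mim (g * h)
  have e2 := h_imi' (g * h)
  have key : h * (g * h)⁻¹ * g = (g * h)⁻¹ := by
    apply IsInverseSemigroup.inv_unique
    · have := h_mim (g * h)
      simp only [h_assoc, hg', hh'] at this ⊢
      exact this
    · have := h_imi' (g * h) g
      simp only [h_assoc, hg', hh'] at this ⊢
      rw [this]
  have hx : idem (g * h)⁻¹ := by
    unfold idem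
    have := h_imi' (g * h) g
    simp only [h_assoc] at this
    calc (g * h)⁻¹ * (g * h)⁻¹ = (h * (g * h)⁻¹ * g) * (h * (g * h)⁻¹ * g) := by rw [key]
      _ = h * (g * h)⁻¹ * g := by simp only [h_assoc, this]
      _ = _ := key
  have := h_ideminv hx
  rw [h_invinv] at this
  rw [this]; exact hx

theorem h_comm {g h : S} (hg : idem g) (hh : idem h) : g * h = h * g := by
  have h1 : g * h * (g * h) = g * h := h_idem_mul hg hh
  have h2 : h * g * (h * g) = h * g := h_idem_mul hh hg
  have h3 := h_ideminv (h_idem_mul hg hh)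
  unfold idem at hg hh
  have hg' : ∀ y, g * (g * y) = g * y := fun y => by rw [← h_assoc, hg]
  have hh' : ∀ y, h * (h * y) = h * y := fun y => by rw [← h_assoc, hh]
  have : h * g = (g * h)⁻¹ := by
    apply IsInverseSemigroup.inv_unique
    · simp only [h_assoc, hg', hh'] at h1 ⊢; exact h1
    · simp only [h_assoc, hg', hh'] at h2 ⊢; exact h2
  rw [this, h3]

theorem h_idem_d (a : S) : idem (a⁻¹ * a) := by
  unfold idem; simp only [h_assoc, h_mim]
theorem h_idem_r (a : S) : idem (a * a⁻¹) := by
  unfold idem; simp only [h_assoc, h_imi]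

theorem h_mulinv (a b : S) : (a * b)⁻¹ = b⁻¹ * a⁻¹ := by
  have c := h_comm (h_idem_r b) (h_idem_d a)
  symm
  apply IsInverseSemigroup.inv_unique
  · calc a * b * (b⁻¹ * a⁻¹) * (a * b) = a * ((b * b⁻¹) * (a⁻¹ * a)) * b := by
          simp only [h_assoc]
      _ = a * b := by rw [c]; simp only [h_assoc, h_mim, h_mim']
  · calc b⁻¹ * a⁻¹ * (a * b) * (b⁻¹ * a⁻¹) = b⁻¹ * ((a⁻¹ * a) * (b * b⁻¹)) * a⁻¹ := by
          simp only [h_assoc]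
      _ = _ := by rw [← c]; simp only [h_assoc, h_imi, h_imi']

theorem h_le_refl (a : S) : nle a a := (mul_inv_mul a).symm

theorem h_le_dd {a b : S} (h : nle a b) : (b⁻¹ * b) * (a⁻¹ * a) = a⁻¹ * a := by
  have c := h_comm (h_idem_d b) (h_idem_d a)
  unfold nle at h
  have h1 : a * (b⁻¹ * b) = a := by
    calc a * (b⁻¹ * b) = b * a⁻¹ * a * (b⁻¹ * b) := by rw [← h]
      _ = b * ((a⁻¹ * a) * (b⁻¹ * b)) := by simp only [h_assoc]
      _ = b * a⁻¹ * a := by rw [← c]; simp only [h_assoc, h_mim']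
      _ = a := h.symm
  rw [c, h_assoc, h1]

theorem h_le_d {a b : S} (h : nle a b) : b⁻¹ * a = a⁻¹ * a := by
  have h1 := h_le_dd h
  unfold nle at h
  calc b⁻¹ * a = b⁻¹ * (b * a⁻¹ * a) := by rw [← h]
    _ = _ := by rw [← h1]; simp only [h_assoc]

theorem h_le_trans {a b c : S} (h : nle a b) (h' : nle b c) : nle a c := by
  have h1 := h_le_d h
  unfold nle at *
  calc a = b * a⁻¹ * a := h
    _ = c * b⁻¹ * b * a⁻¹ * a := by rw [← h']
    _ = c * (b⁻¹ * (b * a⁻¹ * a)) := by simp only [h_assoc]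
    _ = c * a⁻¹ * a := by rw [← h, h1, h_assoc]

theorem h_le_antisymm {a b : S} (h : nle a b) (h' : nle b a) : a = b := by
  have h1 := h_le_dd h
  have h2 := h_le_dd h'
  have c := h_comm (h_idem_d b) (h_idem_d a)
  have : a⁻¹ * a = b⁻¹ * b := by rw [← h1, c, h2]
  unfold nle at h
  rw [h, h_assoc, this, h_mim]

theorem h_range {x e : S} : nle (x * x⁻¹) e ↔ e * x = x := by
  unfold nle
  rw [h_ideminv (h_idem_r x)]
  constructor
  · intro h
    have h' := congrArg (· * x) h
    simp only [h_assoc, h_mim] at h'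
    exact h'.symm
  · intro h
    simp only [h_assoc, h_imi]
    rw [← h_assoc, h]

theorem h_compat {g h : S} (hg : idem g) (hh : idem h) : compat g h := by
  unfold compat
  rw [h_ideminv hg, h_ideminv hh]
  exact ⟨h_idem_mul hg hh, h_idem_mul hg hh⟩

theorem h_join_unique {a b j k : S} (h : isJoin a b j) (h' : isJoin a b k) : j = k :=
  h_le_antisymm (h.2.2 _ h'.1 h'.2.1) (h'.2.2 _ h.1 h.2.1)

end inv

variable [IsBooleanInverseSemigroup S]

theorem h_join_d {a b j : S} (h : isJoin a b j) : isJoin (a⁻¹ * a) (b⁻¹ * b) (j⁻¹ * j) := by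
  have := IsBooleanInverseSemigroup.mul_join a b j j⁻¹ h
  rwa [h_le_d h.1, h_le_d h.2.1] at this

theorem h_join_idem {a b j : S} (ha : idem a) (hb : idem b) (h : isJoin a b j) : idem j := by
  have := h_join_d h
  rw [h_ideminv ha, h_ideminv hb, ha, hb] at this
  rw [h_join_unique h this]
  exact h_idem_d j

/-- Idempotents generated under joins by domains of elements with range below `e`. -/
inductive Pen (e : S) : S → Prop
  | base (x : S) (hx : e * x = x) : Pen e (x⁻¹ * x)
  | join (f g j : S) (hf : Pen e f) (hg : Pen e g) (h : isJoin f g j) : Pen e j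

theorem Pen.idem {e f : S} (h : Pen e f) : idem f := by
  induction h with
  | base x hx => exact h_idem_d x
  | join f g j _ _ h ihf ihg => exact h_join_idem ihf ihg h

theorem Pen.conj {e f : S} (h : Pen e f) (a : S) : Pen e (a⁻¹ * f * a) := by
  induction h with
  | base x hx =>
    have := Pen.base (e := e) (x * a) (by rw [← h_assoc, hx])
    rw [h_mulinv] at this
    simpa only [h_assoc] using this
  | join f g j _ _ h ihf ihg =>
    exact Pen.join _ _ _ ihf ihg (IsBooleanInverseSemigroup.join_mul _ _ _ _
      (IsBooleanInverseSemigroup.mul_join _ _ _ _ h))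

theorem Pen.pencil {e f : S} (h : Pen e f) : pencilLe f e := by
  induction h with
  | base x hx =>
    exact ⟨0, fun _ => x, ⟨fun _ => h_le_refl _, fun c hc => hc 0⟩, fun _ => h_range.2 hx⟩
  | join f g j _ _ h ihf ihg =>
    obtain ⟨m, x, ⟨hx1, hx2⟩, hx3⟩ := ihf
    obtain ⟨n, y, ⟨hy1, hy2⟩, hy3⟩ := ihg
    refine ⟨m + 1 + n, Fin.append (m := m + 1) (n := n + 1) x y, ⟨fun i => ?_, fun c hc => ?_⟩, fun i => ?_⟩
    · refine Fin.addCases (m := m + 1) (n := n + 1) (fun i => ?_) (fun i => ?_) i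
      · simp only [Fin.append_left]; exact h_le_trans (hx1 i) h.1
      · simp only [Fin.append_right]; exact h_le_trans (hy1 i) h.2.1
    · apply h.2.2
      · refine hx2 c fun i => ?_
        have := hc (Fin.castAdd (n + 1) i)
        simpa only [Fin.append_left] using this
      · refine hy2 c fun i => ?_
        have := hc (Fin.natAdd (m + 1) i)
        simpa only [Fin.append_right] using this
    · refine Fin.addCases (m := m + 1) (n := n + 1) (fun i => ?_) (fun i => ?_) i
      · simp only [Fin.append_left]; exact hx3 i
      · simp only [Fin.append_right]; exact hy3 i

theorem h_finjoin {I : Set S} (hI : isAdditiveIdeal I) (m : ℕ) (g : Fin (m + 1) → S)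
    (hg : ∀ i, idem (g i)) (hgI : ∀ i, g i ∈ I) : ∃ j ∈ I, idem j ∧ isJoinFin g j := by
  induction m with
  | zero =>
    refine ⟨g 0, hgI 0, hg 0, fun i => ?_, fun c hc => hc 0⟩
    obtain rfl : i = 0 := Fin.ext (by have := i.2; simp at this ⊢; try omega)
    exact h_le_refl _
  | succ m ih =>
    obtain ⟨k, hkI, hk, hk1, hk2⟩ := ih (fun i => g i.succ) (fun i => hg _) (fun i => hgI _)
    have hc := h_compat (hg 0) hk
    obtain ⟨j, hj⟩ := IsBooleanInverseSemigroup.compat_join _ _ hc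
    refine ⟨j, hI.2.2 _ (hgI 0) _ hkI hc j hj, h_join_idem (hg 0) hk hj, fun i => ?_,
      fun c h => hj.2.2 c (h 0) (hk2 c fun i => h i.succ)⟩
    refine Fin.cases hj.1 (fun i => h_le_trans (hk1 i) hj.2.1) i

end helpers

/-- For nonzero idempotents `e, f` of a Boolean inverse semigroup, `f ≼ e` iff `f`
belongs to every additive ideal containing `e`. -/
theorem pencilLe_iff_mem_additive_ideals {S : Type*} [Mul S] [Zero S] [Inv S]
    [IsBooleanInverseSemigroup S] (e f : S) (he : idem e) (hf : idem f)
    (he0 : e ≠ 0) (hf0 : f ≠ 0) :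
    pencilLe f e ↔ ∀ I : Set S, isAdditiveIdeal I → e ∈ I → f ∈ I := by
  constructor
  · rintro ⟨m, x, hx, hxe⟩ I hI heI
    obtain ⟨j, hjI, -, hj⟩ := h_finjoin hI m (fun i => (x i)⁻¹ * x i) (fun i => h_idem_d _)
      (fun i => by
        have h1 := (hI.2.1 e heI (x i)).2
        rw [h_range.1 (hxe i)] at h1
        exact (hI.2.1 _ h1 _).1)
    rwa [h_le_antisymm (hx.2 j hj.1) (hj.2 f hx.1)]
  · intro H
    have h := H {a | Pen e (a⁻¹ * a)} ⟨⟨e, Pen.base e he⟩, ?_, ?_⟩ (Pen.base e he)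
    · have h' : Pen e (f⁻¹ * f) := h
      rw [h_ideminv hf, hf] at h'
      exact h'.pencil
    · intro a ha s
      have ha' : Pen e (a⁻¹ * a) := ha
      constructor
      · have h1 := ha'.conj ((s * a)⁻¹ * (s * a))
        have h2 : ((s * a)⁻¹ * (s * a))⁻¹ * (a⁻¹ * a) * ((s * a)⁻¹ * (s * a))
            = (s * a)⁻¹ * (s * a) := by
          rw [h_ideminv (h_idem_d _)]
          have h3 : (s * a)⁻¹ * (s * a) * (a⁻¹ * a) = (s * a)⁻¹ * (s * a) := by
            simp only [h_assoc, h_mim]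
          rw [h3]; exact h_idem_d _
        rw [h2] at h1
        exact h1
      · have h1 := ha'.conj s
        show Pen e ((a * s)⁻¹ * (a * s))
        rw [h_mulinv]
        simpa only [h_assoc] using h1
    · intro a ha b hb _ j hj
      exact Pen.join _ _ _ ha hb (h_join_d hj)

end Paper
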